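/- Let X be a real Hilbert space with inner product ⟨·,·⟩ and norm ‖·‖, with orthogonal decomposition X = H⁺ ⊕ H⁻ where H⁻ is a finite-dimensional subspace, and let F: X → ℝ be Fréchet C^1 and satisfy the concavity condition: there is C > 0 such that ⟨F′(x + h) − F′(x), h⟩ ≤ −C‖h‖² for all x ∈ X and all h ∈ H⁻. Let x̄ be a critical point of F. Then there exist r > 0, a continuous map h: {ν ∈ H⁺ : ‖ν‖ < r} → H⁻ with h(0) = 0, and a homeomorphism φ from the open ball B(0, r) ⊆ X onto an open neighborhood of x̄ in X with φ(0) = x̄, such that for every ξ ∈ B(0, r), writing ξ = ν + η with ν ∈ H⁺ and η ∈ H⁻, one has F(φ(ξ)) = −‖η‖² + F(x̄ + ν + h(ν)). Moreover, if a finite group Γ acts on X by linear isometries which leave H⁺ and H⁻ invariant, fix x̄, and satisfy F(γ·x) = F(x) for all γ ∈ Γ and x ∈ X, then h and φ can be chosen Γ-equivariant. -/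

import Mathlib

section Aux
open Set Filter Topology

variable {X : Type*} [NormedAddCommGroup X] [InnerProductSpace ℝ X]

lemma aux_strong {Hm : Submodule ℝ X} {F : X → ℝ} (hF : ContDiff ℝ 1 F) {C : ℝ}
    (hconc : ∀ x : X, ∀ h ∈ Hm,
      fderiv ℝ F (x + h) h - fderiv ℝ F x h ≤ -C * ‖h‖ ^ 2)
    (x h : X) (hh : h ∈ Hm) :
    F (x + h) ≤ F x + fderiv ℝ F x h - C / 2 * ‖h‖ ^ 2 := by
  have hd : Differentiable ℝ F := hF.differentiable (by norm_num)
  let f : ℝ → ℝ := fun s => F (x + s • h) - s * fderiv ℝ F x h + C * s ^ 2 / 2 * ‖h‖ ^ 2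
  have hder : ∀ s : ℝ, HasDerivAt f
      (fderiv ℝ F (x + s • h) h - fderiv ℝ F x h + C * s * ‖h‖ ^ 2) s := by
    intro s
    have h1 : HasDerivAt (fun s : ℝ => x + s • h) h s := by
      simpa using ((hasDerivAt_id s).smul_const h).const_add x
    have h2 : HasDerivAt (fun s : ℝ => F (x + s • h)) (fderiv ℝ F (x + s • h) h) s :=
      (hd (x + s • h)).hasFDerivAt.comp_hasDerivAt s h1
    have h3 : HasDerivAt (fun s : ℝ => s * fderiv ℝ F x h) (fderiv ℝ F x h) s := by
      simpa using (hasDerivAt_id s).mul_const (fderiv ℝ F x h)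
    have h4 : HasDerivAt (fun s : ℝ => C * s ^ 2 / 2 * ‖h‖ ^ 2) (C * s * ‖h‖ ^ 2) s := by
      have := (((hasDerivAt_pow 2 s).const_mul C).div_const 2).mul_const (‖h‖ ^ 2)
      refine this.congr_deriv ?_
      push_cast
      ring
    exact (h2.sub h3).add h4
  have hanti : AntitoneOn f (Ici 0) := by
    apply antitoneOn_of_deriv_nonpos (convex_Ici 0)
    · exact fun s _ => (hder s).continuousAt.continuousWithinAt
    · exact fun s _ => (hder s).differentiableAt.differentiableWithinAt
    · intro s hs
      rw [interior_Ici] at hs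
      have hs : 0 < s := hs
      rw [(hder s).deriv]
      have := hconc x (s • h) (Hm.smul_mem s hh)
      simp only [map_smul, smul_eq_mul, norm_smul, Real.norm_eq_abs, mul_pow, sq_abs] at this
      by_contra! hcon
      have := mul_pos hs hcon
      nlinarith
  have := hanti (show (0:ℝ) ∈ Ici 0 by simp) (show (1:ℝ) ∈ Ici 0 by simp) zero_le_one
  simp [f] at this
  linarith

lemma aux_max (Hm : Submodule ℝ X) [FiniteDimensional ℝ Hm] {F : X → ℝ}
    (hF : ContDiff ℝ 1 F) {C : ℝ} (hC : 0 < C)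
    (hconc : ∀ x : X, ∀ h ∈ Hm,
      fderiv ℝ F (x + h) h - fderiv ℝ F x h ≤ -C * ‖h‖ ^ 2) (x : X) :
    ∃ η ∈ Hm, ∀ w ∈ Hm, fderiv ℝ F (x + η) w = 0 := by
  have hd : Differentiable ℝ F := hF.differentiable (by norm_num)
  have hcont : Continuous (fun η : Hm => F (x + η)) := by
    have := hF.continuous
    fun_prop
  obtain ⟨η, hη⟩ := hcont.exists_forall_ge' 0 (by
    have : Tendsto (fun η : Hm => ‖η‖) (cocompact Hm) atTop := tendsto_norm_cocompact_atTop
    filter_upwards [this.eventually_ge_atTop (2 * ‖fderiv ℝ F x‖ / C)] with η hη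
    have h1 := aux_strong hF hconc x η η.2
    have h2 := (le_abs_self _).trans ((fderiv ℝ F x).le_opNorm (η : X))
    rw [div_le_iff₀ hC] at hη
    have h3 : ‖(η : X)‖ = ‖η‖ := rfl
    rw [h3] at h1 h2
    have := norm_nonneg η
    simp only [ZeroMemClass.coe_zero, add_zero]
    nlinarith)
  refine ⟨η, η.2, fun w hw => ?_⟩
  let f : ℝ → ℝ := fun s => F (x + η + s • w)
  have h1 : HasDerivAt (fun s : ℝ => x + η + s • w) w 0 := by
    simpa using ((hasDerivAt_id (0:ℝ)).smul_const w).const_add (x + η)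
  have h2 : HasDerivAt f (fderiv ℝ F (x + η + (0:ℝ) • w) w) 0 :=
    (hd (x + η + (0:ℝ) • w)).hasFDerivAt.comp_hasDerivAt (0:ℝ) h1
  have hm : IsLocalMax f 0 := by
    refine Eventually.of_forall fun s => ?_
    have := hη (η + s • ⟨w, hw⟩)
    simpa [f, add_assoc] using this
  have := hm.hasDerivAt_eq_zero h2
  simpa using this

/-- ray growth -/
lemma aux_ray {Hm : Submodule ℝ X} {F : X → ℝ} (hF : ContDiff ℝ 1 F) {C : ℝ} (hC : 0 < C)
    (hconc : ∀ x : X, ∀ h ∈ Hm,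
      fderiv ℝ F (x + h) h - fderiv ℝ F x h ≤ -C * ‖h‖ ^ 2)
    (x w : X) (hw : w ∈ Hm) (hx : fderiv ℝ F x w = 0) {s t : ℝ} (hs : 0 ≤ s) (hst : s ≤ t) :
    F (x + t • w) ≤ F (x + s • w) - C / 2 * ((t - s) * ‖w‖) ^ 2 := by
  have h1 := aux_strong hF hconc (x + s • w) ((t - s) • w) (Hm.smul_mem _ hw)
  have e : x + s • w + (t - s) • w = x + t • w := by module
  rw [e] at h1
  have h2 : fderiv ℝ F (x + s • w) w ≤ 0 := by
    rcases hs.eq_or_lt with rfl | hs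
    · simp [hx]
    · have := hconc x (s • w) (Hm.smul_mem _ hw)
      simp only [map_smul, smul_eq_mul, hx, mul_zero, sub_zero] at this
      by_contra! hcon
      have h3 := mul_pos hs hcon
      have : 0 ≤ C * ‖s • w‖ ^ 2 := by positivity
      linarith
  simp only [map_smul, smul_eq_mul, norm_smul, Real.norm_eq_abs, abs_of_nonneg (sub_nonneg.2 hst)] at h1
  have := mul_nonneg (sub_nonneg.2 hst) (neg_nonneg.2 h2)
  linarith

lemma aux_uniq {Hm : Submodule ℝ X} {F : X → ℝ} {C : ℝ} (hC : 0 < C)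
    (hconc : ∀ x : X, ∀ h ∈ Hm,
      fderiv ℝ F (x + h) h - fderiv ℝ F x h ≤ -C * ‖h‖ ^ 2)
    (x a b : X) (ha : a ∈ Hm) (hb : b ∈ Hm)
    (hb' : fderiv ℝ F (x + b) (b - a) = 0) :
    C * ‖b - a‖ ^ 2 ≤ fderiv ℝ F (x + a) (b - a) := by
  have := hconc (x + a) (b - a) (Hm.sub_mem hb ha)
  rw [show x + a + (b - a) = x + b by abel, hb'] at this
  linarith

lemma aux_hcont {Hm : Submodule ℝ X} {F : X → ℝ} (hF : ContDiff ℝ 1 F) {C : ℝ} (hC : 0 < C)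
    (hconc : ∀ x : X, ∀ h ∈ Hm,
      fderiv ℝ F (x + h) h - fderiv ℝ F x h ≤ -C * ‖h‖ ^ 2) (xbar : X) (h : X → X)
    (hh : ∀ ν, h ν ∈ Hm) (hcrit : ∀ ν, ∀ w ∈ Hm, fderiv ℝ F (xbar + ν + h ν) w = 0) :
    Continuous h := by
  rw [continuous_iff_continuousAt]
  intro ν0
  have hc : Continuous (fderiv ℝ F) := hF.continuous_fderiv (by norm_num)
  have key : ∀ ν, ‖h ν - h ν0‖ ≤
      C⁻¹ * ‖fderiv ℝ F (xbar + ν + h ν0) - fderiv ℝ F (xbar + ν0 + h ν0)‖ := by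
    intro ν
    have hd := Hm.sub_mem (hh ν) (hh ν0)
    have h1 := aux_uniq hC hconc (xbar + ν) (h ν0) (h ν) (hh _) (hh _) (hcrit ν _ hd)
    have h2 := hcrit ν0 _ hd
    have h3 := (le_abs_self _).trans ((fderiv ℝ F (xbar + ν + h ν0) -
      fderiv ℝ F (xbar + ν0 + h ν0)).le_opNorm (h ν - h ν0))
    rw [ContinuousLinearMap.sub_apply, h2, sub_zero] at h3
    rw [inv_mul_eq_div, le_div_iff₀ hC]
    rcases (norm_nonneg (h ν - h ν0)).eq_or_lt with h0 | h0
    · rw [← h0]; simp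
    · refine le_of_mul_le_mul_right ?_ h0
      nlinarith
  rw [ContinuousAt, tendsto_iff_norm_sub_tendsto_zero]
  refine squeeze_zero (fun _ => norm_nonneg _) key ?_
  have : Continuous fun ν =>
      C⁻¹ * ‖fderiv ℝ F (xbar + ν + h ν0) - fderiv ℝ F (xbar + ν0 + h ν0)‖ := by fun_prop
  simpa using this.tendsto ν0

end Aux

open Set Filter Topology in
/-- Lemma 3.5 (splitting-lemma-type normal form): if the `C¹` functional `F`
is uniformly concave in the directions of the finite-dimensional subspace
`H⁻ = Hm` of the Hilbert space `X = H⁺ ⊕ H⁻` (with `H⁺ = Hmᗮ`), then near a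
critical point `x̄` there are a continuous fiberwise-maximum map `h` and a
local homeomorphism `φ` with `F(φ(ν + η)) = -‖η‖² + F(x̄ + ν + h ν)`; moreover
`h` and `φ` can be chosen equivariantly with respect to any finite group `Γ`
acting by linear isometries preserving `H⁺`, `H⁻`, `x̄` and `F`. -/
theorem splitting_lemma_normal_form
    (X : Type*) [NormedAddCommGroup X] [InnerProductSpace ℝ X] [CompleteSpace X]
    (Hm : Submodule ℝ X) [FiniteDimensional ℝ Hm]
    (F : X → ℝ) (hF : ContDiff ℝ 1 F)
    (C : ℝ) (hC : 0 < C)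
    (hconc : ∀ x : X, ∀ h ∈ Hm,
      fderiv ℝ F (x + h) h - fderiv ℝ F x h ≤ -C * ‖h‖ ^ 2)
    (xbar : X) (hxbar : fderiv ℝ F xbar = 0)
    (Γ : Type*) [Group Γ] [Finite Γ] (ρ : Γ →* (X ≃ₗᵢ[ℝ] X))
    (hρm : ∀ γ : Γ, ∀ v ∈ Hm, ρ γ v ∈ Hm)
    (hρp : ∀ γ : Γ, ∀ v ∈ Hmᗮ, ρ γ v ∈ Hmᗮ)
    (hρfix : ∀ γ : Γ, ρ γ xbar = xbar)
    (hρF : ∀ (γ : Γ) (v : X), F (ρ γ v) = F v) :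
    ∃ r : ℝ, 0 < r ∧
    ∃ (h φ ψ : X → X) (U : Set X),
      IsOpen U ∧ xbar ∈ U ∧
      (∀ ν, h ν ∈ Hm) ∧ h 0 = 0 ∧
      ContinuousOn h {ν : X | ν ∈ Hmᗮ ∧ ‖ν‖ < r} ∧
      φ 0 = xbar ∧
      Set.BijOn φ (Metric.ball (0 : X) r) U ∧
      ContinuousOn φ (Metric.ball (0 : X) r) ∧
      ContinuousOn ψ U ∧
      (∀ ξ ∈ Metric.ball (0 : X) r, ψ (φ ξ) = ξ) ∧
      (∀ u ∈ U, φ (ψ u) = u) ∧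
      (∀ ν η : X, ν ∈ Hmᗮ → η ∈ Hm → ν + η ∈ Metric.ball (0 : X) r →
        F (φ (ν + η)) = -‖η‖ ^ 2 + F (xbar + ν + h ν)) ∧
      (∀ γ : Γ, ∀ ν ∈ Hmᗮ, ‖ν‖ < r → h (ρ γ ν) = ρ γ (h ν)) ∧
      (∀ γ : Γ, ∀ ξ ∈ Metric.ball (0 : X) r, φ (ρ γ ξ) = ρ γ (φ ξ)) := by
  classical
  have hFc := hF.continuous
  choose h hh hcrit using fun ν => aux_max Hm hF hC hconc (xbar + ν)
  have huniq : ∀ ν, ∀ a ∈ Hm, (∀ w ∈ Hm, fderiv ℝ F (xbar + ν + a) w = 0) → h ν = a := by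
    intro ν a ha hca
    have hd := Hm.sub_mem (hh ν) ha
    have h1 := aux_uniq hC hconc (xbar + ν) a (h ν) ha (hh _) (hcrit ν _ hd)
    rw [hca _ hd] at h1
    have h2 : ‖h ν - a‖ ^ 2 ≤ 0 := by
      by_contra! hcon
      have := mul_pos hC hcon
      linarith
    have h3 : ‖h ν - a‖ = 0 := by
      have := sq_nonneg ‖h ν - a‖
      exact pow_eq_zero_iff (two_ne_zero) |>.1 (le_antisymm h2 this)
    exact sub_eq_zero.1 (norm_eq_zero.1 h3)
  have hcont : Continuous h := aux_hcont hF hC hconc xbar h hh hcrit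
  have h00 : h 0 = 0 := huniq 0 0 Hm.zero_mem (by simp [hxbar])
  -- equivariance of the derivative
  have hFd : Differentiable ℝ F := hF.differentiable (by norm_num)
  have hρder : ∀ (γ : Γ) (x v : X), fderiv ℝ F (ρ γ x) (ρ γ v) = fderiv ℝ F x v := by
    intro γ x v
    have e : F = F ∘ (ρ γ) := by funext y; simp [hρF]
    have h1 : HasFDerivAt (F ∘ (ρ γ))
        ((fderiv ℝ F (ρ γ x)).comp ((ρ γ).toContinuousLinearEquiv : X →L[ℝ] X)) x :=
      (hFd (ρ γ x)).hasFDerivAt.comp x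
        ((ρ γ).toContinuousLinearEquiv : X →L[ℝ] X).hasFDerivAt
    rw [← e] at h1
    rw [h1.fderiv]
    rfl
  have hρinv : ∀ (γ : Γ) (v : X), ρ γ (ρ γ⁻¹ v) = v := by
    intro γ v
    have : (ρ γ * ρ γ⁻¹) v = v := by rw [← map_mul]; simp
    exact this
  have hhρ : ∀ (γ : Γ) (ν : X), h (ρ γ ν) = ρ γ (h ν) := by
    intro γ ν
    refine huniq _ _ (hρm γ _ (hh ν)) fun w hw => ?_
    rw [← hρinv γ w, ← hρfix γ, ← map_add, ← map_add, hρder]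
    exact hcrit ν _ (hρm _ _ hw)
  -- the fibre functional
  let m : X → X := fun ν => xbar + ν + h ν
  let G : X → X → ℝ := fun ν w => F (m ν) - F (m ν + w)
  have hmc : Continuous m := by fun_prop
  have hGc : Continuous (fun p : X × X => G p.1 p.2) := by fun_prop
  have hray : ∀ ν, ∀ w ∈ Hm, ∀ s t : ℝ, 0 ≤ s → s ≤ t →
      G ν (s • w) + C / 2 * ((t - s) * ‖w‖) ^ 2 ≤ G ν (t • w) := by
    intro ν w hw s t hs hst
    have := aux_ray hF hC hconc (m ν) w hw (hcrit ν w hw) hs hst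
    simp only [G]; linarith
  have hG0 : ∀ ν, G ν 0 = 0 := by intro ν; simp [G]
  have hGlow : ∀ ν, ∀ w ∈ Hm, C / 2 * ‖w‖ ^ 2 ≤ G ν w := by
    intro ν w hw
    have := hray ν w hw 0 1 le_rfl zero_le_one
    simpa [hG0] using this
  have hmono : ∀ ν, ∀ w ∈ Hm, ∀ s t : ℝ, 0 ≤ s → s ≤ t → G ν (s • w) ≤ G ν (t • w) := by
    intro ν w hw s t hs hst
    have := hray ν w hw s t hs hst
    have : 0 ≤ C / 2 * ((t - s) * ‖w‖) ^ 2 := by positivity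
    linarith
  have hstrict : ∀ ν, ∀ w ∈ Hm, w ≠ 0 → ∀ s t : ℝ, 0 ≤ s → s < t →
      G ν (s • w) < G ν (t • w) := by
    intro ν w hw hw0 s t hs hst
    have := hray ν w hw s t hs hst.le
    have h1 : 0 < ‖w‖ := norm_pos_iff.2 hw0
    have h2 : 0 < t - s := sub_pos.2 hst
    have : 0 < C / 2 * ((t - s) * ‖w‖) ^ 2 := by positivity
    linarith
  have hTex : ∀ ν η : X, ∃ t : ℝ, 0 ≤ t ∧ (η ∈ Hm → G ν (t • η) = ‖η‖ ^ 2) := by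
    intro ν η
    by_cases hη : η ∈ Hm
    · have hc : ContinuousOn (fun t : ℝ => G ν (t • η)) (Icc 0 (√(2 / C))) := by
        have : Continuous (fun t : ℝ => G ν (t • η)) :=
          hGc.comp (by fun_prop : Continuous fun t : ℝ => (ν, t • η))
        exact this.continuousOn
      have := intermediate_value_Icc (Real.sqrt_nonneg (2 / C)) hc
      obtain ⟨t, ht, hte⟩ := this (show ‖η‖ ^ 2 ∈ _ by
        constructor
        · simp only [zero_smul, hG0]; positivity
        · have h1 := hGlow ν (√(2 / C) • η) (Hm.smul_mem _ hη)
          rw [norm_smul, mul_pow, Real.norm_eq_abs, sq_abs, Real.sq_sqrt (by positivity)] at h1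
          refine le_trans (le_of_eq ?_) h1
          field_simp)
      exact ⟨t, ht.1, fun _ => hte⟩
    · exact ⟨0, le_rfl, fun hc => absurd hc hη⟩
  choose T hT0 hT using hTex
  -- projections
  let P : X →L[ℝ] X := Hm.starProjection
  let Q : X → X := fun ξ => ξ - P ξ
  have hPm : ∀ ξ, P ξ ∈ Hm := fun ξ => Hm.starProjection_apply_mem ξ
  have hQm : ∀ ξ, Q ξ ∈ Hmᗮ := fun ξ => Hm.sub_starProjection_mem_orthogonal ξ
  have hPadd : ∀ ν ∈ Hmᗮ, ∀ η ∈ Hm, P (ν + η) = η := by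
    intro ν hν η hη
    have h1 : P ν = 0 := (Submodule.starProjection_apply_eq_zero_iff Hm).2 hν
    have h2 : P η = η := Submodule.starProjection_eq_self_iff.2 hη
    rw [map_add, h1, h2, zero_add]
  have hQadd : ∀ ν ∈ Hmᗮ, ∀ η ∈ Hm, Q (ν + η) = ν := by
    intro ν hν η hη
    simp only [Q, hPadd ν hν η hη, add_sub_cancel_right]
  have hQP : ∀ ξ, Q ξ + P ξ = ξ := fun ξ => by simp [Q]
  have hPc : Continuous P := P.continuous
  have hQc : Continuous Q := by fun_prop
  have hPρ : ∀ (γ : Γ) ξ, P (ρ γ ξ) = ρ γ (P ξ) := by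
    intro γ ξ
    conv_lhs => rw [← hQP ξ, map_add]
    exact hPadd _ (hρp γ _ (hQm ξ)) _ (hρm γ _ (hPm ξ))
  have hQρ : ∀ (γ : Γ) ξ, Q (ρ γ ξ) = ρ γ (Q ξ) := by
    intro γ ξ
    simp only [Q, hPρ, map_sub]
  -- the maps
  let φ : X → X := fun ξ => m (Q ξ) + T (Q ξ) (P ξ) • P ξ
  let W : X → X := fun u => P (u - xbar) - h (Q (u - xbar))
  let ψ : X → X := fun u => Q (u - xbar) + (√(G (Q (u - xbar)) (W u)) / ‖W u‖) • W u
  have hWm : ∀ u, W u ∈ Hm := fun u => Hm.sub_mem (hPm _) (hh _)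
  have hWc : Continuous W := by fun_prop
  have hmW : ∀ u, m (Q (u - xbar)) + W u = u := by
    intro u
    have := hQP (u - xbar)
    calc _ = xbar + (Q (u - xbar) + P (u - xbar)) := by simp only [m, W]; abel
      _ = u := by rw [this]; abel
  have hφQ : ∀ ξ, Q (φ ξ - xbar) = Q ξ := by
    intro ξ
    have : φ ξ - xbar = Q ξ + (h (Q ξ) + T (Q ξ) (P ξ) • P ξ) := by simp only [φ, m]; abel
    rw [this]
    exact hQadd _ (hQm _) _ (Hm.add_mem (hh _) (Hm.smul_mem _ (hPm _)))
  have hφW : ∀ ξ, W (φ ξ) = T (Q ξ) (P ξ) • P ξ := by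
    intro ξ
    have h1 := hmW (φ ξ)
    rw [hφQ] at h1
    exact add_left_cancel h1
  have hψφ : ∀ ξ, ψ (φ ξ) = ξ := by
    intro ξ
    simp only [ψ, hφQ, hφW]
    rw [hT _ _ (hPm ξ), Real.sqrt_sq (norm_nonneg _)]
    by_cases h0 : P ξ = 0
    · have := hQP ξ
      rw [h0, add_zero] at this
      simp [h0, this]
    · have ht : 0 < T (Q ξ) (P ξ) := by
        rcases (hT0 (Q ξ) (P ξ)).eq_or_lt with h1 | h1
        · have h2 := hT (Q ξ) (P ξ) (hPm ξ)
          rw [← h1, zero_smul, hG0] at h2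
          exact absurd (norm_eq_zero.1 (pow_eq_zero_iff two_ne_zero |>.1 h2.symm)) h0
        · exact h1
      have hn : ‖P ξ‖ ≠ 0 := norm_ne_zero_iff.2 h0
      rw [norm_smul, Real.norm_eq_abs, abs_of_pos ht, smul_smul]
      have : ‖P ξ‖ / (T (Q ξ) (P ξ) * ‖P ξ‖) * T (Q ξ) (P ξ) = 1 := by
        field_simp
      rw [this, one_smul, hQP]
  have hψQ : ∀ u, Q (ψ u) = Q (u - xbar) := fun u =>
    hQadd _ (hQm _) _ (Hm.smul_mem _ (hWm u))
  have hψP : ∀ u, P (ψ u) = (√(G (Q (u - xbar)) (W u)) / ‖W u‖) • W u := fun u =>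
    hPadd _ (hQm _) _ (Hm.smul_mem _ (hWm u))
  have hGnn : ∀ u, 0 ≤ G (Q (u - xbar)) (W u) := by
    intro u
    have := hGlow (Q (u - xbar)) (W u) (hWm u)
    exact le_trans (by positivity) this
  have hψn : ∀ u, ‖P (ψ u)‖ = √(G (Q (u - xbar)) (W u)) := by
    intro u
    rw [hψP, norm_smul, Real.norm_eq_abs, abs_of_nonneg (by positivity)]
    by_cases h0 : W u = 0
    · simp [h0, hG0]
    · have hn : ‖W u‖ ≠ 0 := norm_ne_zero_iff.2 h0
      field_simp
  have hφψ : ∀ u, φ (ψ u) = u := by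
    intro u
    have hspec := hT (Q (ψ u)) (P (ψ u)) (hPm _)
    have ht0 := hT0 (Q (ψ u)) (P (ψ u))
    suffices hs : T (Q (ψ u)) (P (ψ u)) • P (ψ u) = W u by
      simp only [φ]
      rw [hs, hψQ, hmW]
    generalize T (Q (ψ u)) (P (ψ u)) = t at *
    rw [hψn, Real.sq_sqrt (hGnn u), hψQ, hψP, smul_smul] at hspec
    rw [hψP, smul_smul]
    by_cases h0 : W u = 0
    · simp [h0]
    · set c := t * (√(G (Q (u - xbar)) (W u)) / ‖W u‖) with hc
      have hc0 : 0 ≤ c := by positivity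
      have hc1 : c = 1 := by
        rcases lt_trichotomy c 1 with h1 | h1 | h1
        · have := hstrict (Q (u - xbar)) (W u) (hWm u) h0 c 1 hc0 h1
          rw [one_smul, hspec] at this
          exact absurd this (lt_irrefl _)
        · exact h1
        · have := hstrict (Q (u - xbar)) (W u) (hWm u) h0 1 c zero_le_one h1
          rw [one_smul, hspec] at this
          exact absurd this (lt_irrefl _)
      rw [hc1, one_smul]
  have hψc : Continuous ψ := by
    have hg : Continuous fun u => G (Q (u - xbar)) (W u) :=
      hGc.comp (by fun_prop : Continuous fun u => (Q (u - xbar), W u))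
    have hQc' : Continuous fun u => Q (u - xbar) := by fun_prop
    refine hQc'.add ?_
    rw [continuous_iff_continuousAt]
    intro u0
    by_cases h0 : W u0 = 0
    · rw [ContinuousAt, h0, smul_zero, tendsto_zero_iff_norm_tendsto_zero]
      have e : (fun u => ‖(√(G (Q (u - xbar)) (W u)) / ‖W u‖) • W u‖) =
          fun u => √(G (Q (u - xbar)) (W u)) := by
        funext u; rw [← hψP, hψn]
      rw [e]
      have := (hg.sqrt).tendsto u0
      simpa [h0, hG0] using this
    · have hn : ‖W u0‖ ≠ 0 := norm_ne_zero_iff.2 h0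
      exact ((hg.sqrt.continuousAt).div hWc.norm.continuousAt hn).smul hWc.continuousAt
  have hφc : Continuous φ := by
    refine (hmc.comp hQc).add ?_
    rw [continuous_iff_continuousAt]
    intro ξ0
    by_cases h0 : P ξ0 = 0
    · rw [ContinuousAt, h0, smul_zero, tendsto_zero_iff_norm_tendsto_zero]
      have key : ∀ ξ, ‖T (Q ξ) (P ξ) • P ξ‖ ≤ √(2 / C * ‖P ξ‖ ^ 2) := by
        intro ξ
        apply Real.le_sqrt_of_sq_le
        have h1 := hGlow (Q ξ) (T (Q ξ) (P ξ) • P ξ) (Hm.smul_mem _ (hPm ξ))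
        rw [hT _ _ (hPm ξ)] at h1
        rw [div_mul_eq_mul_div, le_div_iff₀ hC]
        linarith
      refine squeeze_zero (fun _ => norm_nonneg _) key ?_
      have : Continuous fun ξ => √(2 / C * ‖P ξ‖ ^ 2) := by fun_prop
      simpa [h0] using this.tendsto ξ0
    · have hga : ∀ a : ℝ, Continuous fun ξ => G (Q ξ) (a • P ξ) := fun a =>
        hGc.comp (by fun_prop : Continuous fun ξ => (Q ξ, a • P ξ))
      have hnc : Continuous fun ξ => ‖P ξ‖ ^ 2 := by fun_prop
      have hTc : ContinuousAt (fun ξ => T (Q ξ) (P ξ)) ξ0 := by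
        refine tendsto_order.2 ⟨fun a ha => ?_, fun b hb => ?_⟩
        · rcases lt_or_ge a 0 with ha0 | ha0
          · exact Eventually.of_forall fun ξ => ha0.trans_le (hT0 _ _)
          · have h1 := hstrict (Q ξ0) (P ξ0) (hPm _) h0 a _ ha0 ha
            rw [hT _ _ (hPm _)] at h1
            filter_upwards [(hga a).continuousAt.eventually_lt hnc.continuousAt h1] with ξ hξ
            by_contra! hcon
            have := hmono (Q ξ) (P ξ) (hPm _) _ a (hT0 _ _) hcon
            rw [hT _ _ (hPm _)] at this
            linarith
        · have h1 := hstrict (Q ξ0) (P ξ0) (hPm _) h0 _ b (hT0 _ _) hb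
          rw [hT _ _ (hPm _)] at h1
          filter_upwards [hnc.continuousAt.eventually_lt (hga b).continuousAt h1] with ξ hξ
          by_contra! hcon
          have := hmono (Q ξ) (P ξ) (hPm _) b _ ((hT0 _ _).trans hb.le) hcon
          rw [hT _ _ (hPm _)] at this
          linarith
      exact hTc.smul hPc.continuousAt
  have hψρ : ∀ (γ : Γ) u, ψ (ρ γ u) = ρ γ (ψ u) := by
    intro γ u
    have e1 : ρ γ u - xbar = ρ γ (u - xbar) := by rw [map_sub, hρfix]
    have eW : W (ρ γ u) = ρ γ (W u) := by
      simp only [W]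
      rw [e1, hPρ, hQρ, hhρ]
      exact (map_sub (ρ γ) _ _).symm
    have em : ∀ ν, m (ρ γ ν) = ρ γ (m ν) := by
      intro ν
      simp only [m]
      rw [map_add, map_add, hρfix, hhρ]
    have eG : ∀ ν w, G (ρ γ ν) (ρ γ w) = G ν w := by
      intro ν w
      simp only [G]
      rw [em, ← map_add, hρF, hρF]
    simp only [ψ]
    rw [eW, e1, hQρ, eG, LinearIsometryEquiv.norm_map, map_add, map_smul]
  have hφ0 : φ 0 = xbar := by simp [φ, m, Q, h00]
  refine ⟨1, one_pos, h, φ, ψ, ψ ⁻¹' Metric.ball 0 1, Metric.isOpen_ball.preimage hψc, ?_, hh, h00,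
    hcont.continuousOn, hφ0, ⟨?_, ?_, ?_⟩, hφc.continuousOn, hψc.continuousOn,
    fun ξ _ => hψφ ξ, fun u _ => hφψ u, ?_, fun γ ν _ _ => hhρ γ ν, ?_⟩
  · rw [mem_preimage, ← hφ0, hψφ]; simp
  · intro ξ hξ
    rw [mem_preimage, hψφ]; exact hξ
  · exact (Function.LeftInverse.injective hψφ).injOn
  · exact fun u hu => ⟨ψ u, hu, hφψ u⟩
  · intro ν η hν hη _
    have h1 := hT ν η hη
    simp only [φ, hPadd ν hν η hη, hQadd ν hν η hη]
    simp only [G, m] at h1 ⊢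
    linarith
  · intro γ ξ _
    have : ρ γ ξ = ψ (ρ γ (φ ξ)) := by rw [hψρ, hψφ]
    rw [this, hφψ]
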